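/- There is a constant c > 0 depending only on f and D such that for every ν ∈ (0,1], the time average over [T₁,T₂] satisfies { ‖u(t)‖₁² } ≥ c ν⁻¹. -/

import Mathlib

open MeasureTheory Set
open scoped ENNReal

/-- The `L^p` norm (on the circle, i.e. over one period `(0,1]`) of the `m`-th
derivative of a function `v : ℝ → ℝ` (identified with a function on `S¹ = ℝ/ℤ`). -/
noncomputable def sobLp (m : ℕ) (p : ℝ≥0∞) (v : ℝ → ℝ) : ℝ :=
  (eLpNorm (iteratedDeriv m v) p (volume.restrict (Ioc (0:ℝ) 1))).toReal

/-- `u` is a smooth, space-periodic, zero-mean-value solution of the generalised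
Burgers equation `u_t + f'(u) u_x - ν u_xx = 0` with strongly convex `f` and
nonzero initial condition. -/
structure IsBurgersSolution (f : ℝ → ℝ) (σ ν : ℝ) (u : ℝ → ℝ → ℝ) : Prop where
  hf : ContDiff ℝ (⊤ : ℕ∞) f
  hσ : 0 < σ
  hconv : ∀ y, σ ≤ iteratedDeriv 2 f y
  hν : 0 < ν
  hu : ContDiffOn ℝ (⊤ : ℕ∞) (Function.uncurry u) (Ici (0:ℝ) ×ˢ univ)
  hper : ∀ t x, u t (x + 1) = u t x
  hpde : ∀ t, 0 < t → ∀ x,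
    deriv (fun s => u s x) t + deriv f (u t x) * deriv (u t) x
      - ν * deriv (deriv (u t)) x = 0
  hmean : ∀ t, 0 ≤ t → ∫ x in Ioc (0:ℝ) 1, u t x = 0
  hinit : ∃ x, u 0 x ≠ 0

/-- The quantity `D = max(|u₀|₁⁻¹, |u₀|_{1,∞})`. -/
noncomputable def burgersD (u : ℝ → ℝ → ℝ) : ℝ :=
  max (sobLp 0 1 (u 0))⁻¹ (sobLp 1 ⊤ (u 0))

/-- `T₁ = D⁻² C̃⁻¹ / 4`. -/
noncomputable def burgersT₁ (D Ct : ℝ) : ℝ := (D ^ 2)⁻¹ * Ct⁻¹ / 4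

/-- `T₂ = max(3T₁/2, 2Dσ⁻¹)`. -/
noncomputable def burgersT₂ (σ D Ct : ℝ) : ℝ :=
  max (3 / 2 * burgersT₁ D Ct) (2 * D * σ⁻¹)

/-- Time average over `[T₁, T₂]`. -/
noncomputable def timeAvg (T₁ T₂ : ℝ) (A : ℝ → ℝ) : ℝ :=
  (T₂ - T₁)⁻¹ * ∫ t in T₁..T₂, A t

/-- The structure function `S_p(ℓ)`. -/
noncomputable def structFun (T₁ T₂ : ℝ) (u : ℝ → ℝ → ℝ) (p ℓ : ℝ) : ℝ :=
  timeAvg T₁ T₂ (fun t => ∫ x in Ioc (0:ℝ) 1, |u t (x + ℓ) - u t x| ^ p)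

/-!
The energy `|u|²` is lost only through dissipation: its drop over `[T₁, T₂]` is exactly
`2ν ∫ ‖u‖₁²`, so it suffices that a fixed amount of energy disappears between `T₁` and `T₂`.

* At `T₁` the energy is still large: `|u₀|² ≥ |u₀|_{L¹}² ≥ D⁻²`, and the bound `‖u‖₁² ≤ C̃ν⁻¹`
  lets at most `2C̃T₁ = D⁻²/2` of it dissipate.
* At `T₂` it is small: at a spatial maximum `v = u_x` satisfies the Riccati inequality
  `v_t ≤ -σv²`, which gives Oleinik's estimate `u_x ≤ (σt)⁻¹`; a periodic function with a zero and
  this one-sided slope bound is at most `(σt)⁻¹` in absolute value, whence `|u|² ≤ D⁻²/4` at `T₂`.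
-/

open Function (uncurry)
open scoped Topology ContDiff

section PartialDerivatives

variable {𝕜 E : Type*} [NontriviallyNormedField 𝕜] [NormedAddCommGroup E] [NormedSpace 𝕜 E]

/-- The partial derivative `∂u/∂t` of a function `u t x` of two scalar variables. -/
noncomputable def partialFst (u : 𝕜 → 𝕜 → E) (t x : 𝕜) : E := deriv (fun s => u s x) t

/-- The partial derivative `∂u/∂x` of a function `u t x` of two scalar variables. -/
noncomputable def partialSnd (u : 𝕜 → 𝕜 → E) (t x : 𝕜) : E := deriv (u t) x

variable {u : 𝕜 → 𝕜 → E} {t x : 𝕜}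

lemma hasDerivAt_fst_fderiv (h : DifferentiableAt 𝕜 (uncurry u) (t, x)) :
    HasDerivAt (fun s => u s x) (fderiv 𝕜 (uncurry u) (t, x) (1, 0)) t :=
  h.hasFDerivAt.comp_hasDerivAt (f := fun s => (s, x)) t
    ((hasDerivAt_id t).prodMk (hasDerivAt_const t x))

lemma hasDerivAt_snd_fderiv (h : DifferentiableAt 𝕜 (uncurry u) (t, x)) :
    HasDerivAt (u t) (fderiv 𝕜 (uncurry u) (t, x) (0, 1)) x :=
  h.hasFDerivAt.comp_hasDerivAt x ((hasDerivAt_const x t).prodMk (hasDerivAt_id x))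

lemma hasDerivAt_partialFst (h : DifferentiableAt 𝕜 (uncurry u) (t, x)) :
    HasDerivAt (fun s => u s x) (partialFst u t x) t :=
  (hasDerivAt_fst_fderiv h).differentiableAt.hasDerivAt

lemma hasDerivAt_partialSnd (h : DifferentiableAt 𝕜 (uncurry u) (t, x)) :
    HasDerivAt (u t) (partialSnd u t x) x :=
  (hasDerivAt_snd_fderiv h).differentiableAt.hasDerivAt

lemma uncurry_partialFst_eventuallyEq (h : ContDiffAt 𝕜 1 (uncurry u) (t, x)) :
    uncurry (partialFst u) =ᶠ[𝓝 (t, x)] fun q => fderiv 𝕜 (uncurry u) q (1, 0) := by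
  filter_upwards [h.eventually (by simp)] with q hq
  exact (hasDerivAt_fst_fderiv (hq.differentiableAt one_ne_zero)).deriv

lemma uncurry_partialSnd_eventuallyEq (h : ContDiffAt 𝕜 1 (uncurry u) (t, x)) :
    uncurry (partialSnd u) =ᶠ[𝓝 (t, x)] fun q => fderiv 𝕜 (uncurry u) q (0, 1) := by
  filter_upwards [h.eventually (by simp)] with q hq
  exact (hasDerivAt_snd_fderiv (hq.differentiableAt one_ne_zero)).deriv

lemma contDiffAt_partialFst {m n : ℕ∞ω} (h : ContDiffAt 𝕜 n (uncurry u) (t, x))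
    (hmn : m + 1 ≤ n) : ContDiffAt 𝕜 m (uncurry (partialFst u)) (t, x) :=
  ((h.fderiv_right hmn).clm_apply contDiffAt_const).congr_of_eventuallyEq
    (uncurry_partialFst_eventuallyEq (h.of_le (le_add_self.trans hmn)))

lemma contDiffAt_partialSnd {m n : ℕ∞ω} (h : ContDiffAt 𝕜 n (uncurry u) (t, x))
    (hmn : m + 1 ≤ n) : ContDiffAt 𝕜 m (uncurry (partialSnd u)) (t, x) :=
  ((h.fderiv_right hmn).clm_apply contDiffAt_const).congr_of_eventuallyEq
    (uncurry_partialSnd_eventuallyEq (h.of_le (le_add_self.trans hmn)))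

lemma continuousOn_partialSnd {s : Set 𝕜} (hs : UniqueDiffOn 𝕜 s)
    (h : ContDiffOn 𝕜 1 (uncurry u) (s ×ˢ univ)) :
    ContinuousOn (uncurry (partialSnd u)) (s ×ˢ univ) := by
  refine ((h.continuousOn_fderivWithin (hs.prod uniqueDiffOn_univ) le_rfl).clm_apply
    (continuousOn_const (c := ((0 : 𝕜), (1 : 𝕜))))).congr ?_
  rintro ⟨t, x⟩ htx
  have hline : HasDerivWithinAt (fun y : 𝕜 => (t, y)) ((0 : 𝕜), (1 : 𝕜)) univ x :=
    ((hasDerivAt_const x t).prodMk (hasDerivAt_id x)).hasDerivWithinAt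
  have hu := (h.differentiableOn one_ne_zero (t, x) htx).hasFDerivWithinAt
  exact (hu.comp_hasDerivWithinAt x hline fun y _ => ⟨htx.1, mem_univ y⟩).hasDerivAt
    Filter.univ_mem |>.deriv

lemma partialFst_partialSnd_comm (h : ContDiffAt 𝕜 (minSmoothness 𝕜 2) (uncurry u) (t, x)) :
    partialFst (partialSnd u) t x = partialSnd (partialFst u) t x := by
  have h2 : ContDiffAt 𝕜 (1 + 1) (uncurry u) (t, x) :=
    h.of_le (by rw [one_add_one_eq_two]; exact le_minSmoothness)
  have h1 : ContDiffAt 𝕜 1 (uncurry u) (t, x) := h2.of_le le_add_self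
  have hd : DifferentiableAt 𝕜 (fderiv 𝕜 (uncurry u)) (t, x) :=
    (h2.fderiv_right le_rfl).differentiableAt one_ne_zero
  have hsecond (e e' : 𝕜 × 𝕜) : fderiv 𝕜 (fun q => fderiv 𝕜 (uncurry u) q e) (t, x) e' =
      fderiv 𝕜 (fderiv 𝕜 (uncurry u)) (t, x) e' e := by
    simp [fderiv_clm_apply hd (differentiableAt_const e)]
  calc partialFst (partialSnd u) t x
      = fderiv 𝕜 (uncurry (partialSnd u)) (t, x) (1, 0) :=
        (hasDerivAt_fst_fderiv
          ((contDiffAt_partialSnd h2 le_rfl).differentiableAt one_ne_zero)).deriv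
    _ = fderiv 𝕜 (fderiv 𝕜 (uncurry u)) (t, x) (1, 0) (0, 1) := by
        rw [(uncurry_partialSnd_eventuallyEq h1).fderiv_eq, hsecond]
    _ = fderiv 𝕜 (fderiv 𝕜 (uncurry u)) (t, x) (0, 1) (1, 0) :=
        h.isSymmSndFDerivAt le_rfl (1, 0) (0, 1)
    _ = fderiv 𝕜 (uncurry (partialFst u)) (t, x) (0, 1) := by
        rw [(uncurry_partialFst_eventuallyEq h1).fderiv_eq, hsecond]
    _ = partialSnd (partialFst u) t x :=
        (hasDerivAt_snd_fderiv
          ((contDiffAt_partialFst h2 le_rfl).differentiableAt one_ne_zero)).deriv.symm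

end PartialDerivatives

section MaximumPrinciple

lemma deriv_deriv_nonpos_of_isLocalMax {g : ℝ → ℝ} {x : ℝ} (hmax : IsLocalMax g x)
    (hg : ContinuousAt g x) : deriv (deriv g) x ≤ 0 := by
  by_contra! hpos
  have hmin : IsLocalMin g x := isLocalMin_of_deriv_deriv_pos hpos hmax.deriv_eq_zero hg
  have hconst : g =ᶠ[𝓝 x] fun _ => g x := by
    filter_upwards [hmin, hmax] with y hy hy' using le_antisymm hy' hy
  have hzero : deriv (deriv g) x = 0 := by simpa using hconst.deriv.deriv_eq
  exact hpos.ne' hzero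

lemma nonneg_of_hasDerivWithinAt_of_isMaxOn_right {g : ℝ → ℝ} {a b g' : ℝ} (hab : a < b)
    (hmax : IsMaxOn g (Icc a b) b) (hg : HasDerivWithinAt g g' (Icc a b) b) : 0 ≤ g' := by
  have hdir : a - b ∈ posTangentConeAt (Icc a b) b :=
    sub_mem_posTangentConeAt_of_segment_subset (by rw [segment_symm, segment_eq_Icc hab.le])
  have hle : (a - b) * g' ≤ 0 := by
    simpa using hmax.localize.hasFDerivWithinAt_nonpos hg.hasFDerivWithinAt hdir
  exact nonneg_of_mul_nonpos_right hle (sub_neg.2 hab)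

lemma exists_forall_le_of_periodic {X α : Type*} [TopologicalSpace X] [LinearOrder α]
    [TopologicalSpace α] [ClosedIciTopology α] {K : Set X} (hK : IsCompact K) (hne : K.Nonempty)
    {c : ℝ} (hc : 0 < c) {w : X → ℝ → α} (hw : ContinuousOn (uncurry w) (K ×ˢ univ))
    (hper : ∀ t ∈ K, Function.Periodic (w t) c) :
    ∃ t₀ ∈ K, ∃ x₀, ∀ t ∈ K, ∀ x, w t x ≤ w t₀ x₀ := by
  obtain ⟨⟨t₀, x₀⟩, hmem, hmax⟩ := (hK.prod (isCompact_Icc (a := 0) (b := c))).exists_isMaxOn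
    (hne.prod (nonempty_Icc.2 hc.le)) (hw.mono (prod_mono_right (subset_univ _)))
  refine ⟨t₀, hmem.1, x₀, fun t ht x => ?_⟩
  obtain ⟨y, hy, hxy⟩ := (hper t ht).exists_mem_Ico₀ hc x
  exact hxy ▸ hmax (show (t, y) ∈ K ×ˢ Icc 0 c from ⟨ht, Ico_subset_Icc_self hy⟩)

lemma le_inv_of_riccati_at_spatial_max {a b c σ : ℝ} {v : ℝ → ℝ → ℝ} (hab : a < b) (hc : 0 < c)
    (hσ : 0 < σ) (hcont : ContinuousOn (uncurry v) (Icc a b ×ˢ univ))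
    (hper : ∀ t ∈ Icc a b, Function.Periodic (v t) c)
    (hdiff : ∀ t ∈ Ioc a b, ∀ x, DifferentiableAt ℝ (fun s => v s x) t)
    (hriccati : ∀ t ∈ Ioc a b, ∀ x, (∀ y, v t y ≤ v t x) → partialFst v t x ≤ -(σ * v t x ^ 2))
    (x : ℝ) : v b x ≤ (σ * (b - a))⁻¹ := by
  obtain ⟨t₀, ht₀, x₀, hmax⟩ := exists_forall_le_of_periodic (w := fun t x => (t - a) * v t x)
    isCompact_Icc (nonempty_Icc.2 hab.le) hc
    (ContinuousOn.mul (f := fun p : ℝ × ℝ => p.1 - a) (by fun_prop) hcont)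
    fun t ht x => by simp only [hper t ht x]
  suffices hbound : σ * ((t₀ - a) * v t₀ x₀) ≤ 1 by
    rw [← one_div, le_div_iff₀ (mul_pos hσ (sub_pos.2 hab))]
    calc v b x * (σ * (b - a)) = σ * ((b - a) * v b x) := by ring
      _ ≤ σ * ((t₀ - a) * v t₀ x₀) :=
        mul_le_mul_of_nonneg_left (hmax b (right_mem_Icc.2 hab.le) x) hσ.le
      _ ≤ 1 := hbound
  rcases le_or_gt ((t₀ - a) * v t₀ x₀) 0 with hneg | hpos
  · exact (mul_nonpos_of_nonneg_of_nonpos hσ.le hneg).trans zero_le_one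
  have hat₀ : 0 < t₀ - a :=
    (sub_nonneg.2 ht₀.1).lt_of_ne' (left_ne_zero_of_mul hpos.ne')
  have hv : 0 < v t₀ x₀ := pos_of_mul_pos_right hpos hat₀.le
  have ht₀' : t₀ ∈ Ioc a b := ⟨sub_pos.1 hat₀, ht₀.2⟩
  have hspace : ∀ y, v t₀ y ≤ v t₀ x₀ := fun y => le_of_mul_le_mul_left (hmax t₀ ht₀ y) hat₀
  -- At a positive maximum of `(t - a) v` its time derivative `v + (t - a) v_t` is nonnegative, and
  -- inserting `v_t ≤ -σ v²` bounds the maximum by `σ⁻¹`.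
  have htime : 0 ≤ 1 * v t₀ x₀ + (t₀ - a) * partialFst v t₀ x₀ :=
    nonneg_of_hasDerivWithinAt_of_isMaxOn_right ht₀'.1
      (fun t ht => hmax t (Icc_subset_Icc_right ht₀.2 ht) x₀)
      (((hasDerivAt_id t₀).sub_const a).mul (hdiff t₀ ht₀' x₀).hasDerivAt).hasDerivWithinAt
  have hdecay := mul_le_mul_of_nonneg_left (hriccati t₀ ht₀' x₀ hspace) hat₀.le
  refine le_of_mul_le_mul_left ?_ hv
  linarith

end MaximumPrinciple

section Periodic

lemma exists_eq_zero_of_integral_eq_zero {v : ℝ → ℝ} {a b : ℝ} (hab : a ≠ b)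
    (hv : ContinuousOn v (uIcc a b)) (hint : ∫ x in a..b, v x = 0) : ∃ z, v z = 0 := by
  obtain ⟨z, -, hz⟩ := exists_eq_interval_average hab hv
  exact ⟨z, by rw [hz, interval_average_eq, hint, smul_zero]⟩

lemma abs_le_mul_period_of_deriv_le {v : ℝ → ℝ} {K c z : ℝ} (hc : 0 < c)
    (hv : Differentiable ℝ v) (hK : ∀ x, deriv v x ≤ K) (hper : Function.Periodic v c)
    (hz : v z = 0) (x : ℝ) : |v x| ≤ K * c := by
  have hincr : ∀ {p q}, p ≤ q → v q - v p ≤ K * (q - p) :=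
    fun hpq => image_sub_le_mul_sub_of_deriv_le hv hK hpq
  have hK0 : 0 ≤ K := by
    have h0 := hincr (le_add_of_nonneg_right hc.le : z ≤ z + c)
    rw [hper z, sub_self, add_sub_cancel_left] at h0
    exact nonneg_of_mul_nonneg_left h0 hc
  obtain ⟨y, ⟨hzy, hyz⟩, hxy⟩ := hper.exists_mem_Ico hc x z
  have hupper : v y - 0 ≤ K * (y - z) := hz ▸ hincr hzy
  have hlower : 0 - v y ≤ K * (z + c - y) := by
    simpa only [hper z, hz] using hincr hyz.le
  rw [hxy, abs_le]
  constructor <;> nlinarith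

lemma integral_comp_mul_deriv_eq_zero {g w w' : ℝ → ℝ} {a b : ℝ} (hg : Continuous g)
    (hw : ∀ x ∈ uIcc a b, HasDerivAt w (w' x) x) (hw' : ContinuousOn w' (uIcc a b))
    (hab : w a = w b) : ∫ x in a..b, g (w x) * w' x = 0 := by
  have hsubst := intervalIntegral.integral_comp_mul_deriv hw hw' hg
  rwa [hab, intervalIntegral.integral_same] at hsubst

lemma integral_mul_deriv_deriv_eq_neg {w w' w'' : ℝ → ℝ} {a b : ℝ}
    (hw : ∀ x ∈ uIcc a b, HasDerivAt w (w' x) x) (hw' : ∀ x ∈ uIcc a b, HasDerivAt w' (w'' x) x)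
    (hw'' : IntervalIntegrable w'' volume a b) (hab : w a = w b) (hab' : w' a = w' b) :
    ∫ x in a..b, w x * w'' x = -∫ x in a..b, w' x ^ 2 := by
  have hcw' : ContinuousOn w' (uIcc a b) := fun x hx => (hw' x hx).continuousAt.continuousWithinAt
  rw [intervalIntegral.integral_mul_deriv_eq_deriv_mul hw hw' hcw'.intervalIntegrable hw'', hab,
    hab', sub_self, zero_sub]
  simp only [sq]

end Periodic

section ParametricIntegrals

variable {E : Type*} [NormedAddCommGroup E] [NormedSpace ℝ E]

lemma continuousOn_intervalIntegral {X : Type*} [TopologicalSpace X] {s : Set X} {F : X → ℝ → E}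
    (hF : ContinuousOn (uncurry F) (s ×ˢ univ)) (a b : ℝ) :
    ContinuousOn (fun t => ∫ x in a..b, F t x) s := by
  rw [continuousOn_iff_continuous_domRestrict]
  refine intervalIntegral.continuous_parametric_intervalIntegral_of_continuous'
    (f := fun (t : s) x => F t x) ?_ a b
  exact hF.comp_continuous (f := fun p : s × ℝ => ((p.1 : X), p.2)) (by fun_prop)
    fun p => ⟨p.1.2, mem_univ _⟩

lemma hasDerivAt_intervalIntegral {𝕜 : Type*} [RCLike 𝕜] [NormedSpace 𝕜 E]
    {F F' : 𝕜 → ℝ → E} {s : Set 𝕜} {t₀ : 𝕜} {a b : ℝ} (hs : s ∈ 𝓝 t₀)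
    (hF : ∀ t ∈ s, ContinuousOn (F t) (uIcc a b))
    (hF' : ContinuousOn (uncurry F') (s ×ˢ uIcc a b))
    (hderiv : ∀ t ∈ s, ∀ x ∈ uIcc a b, HasDerivAt (fun t => F t x) (F' t x) t) :
    HasDerivAt (fun t => ∫ x in a..b, F t x) (∫ x in a..b, F' t₀ x) t₀ := by
  obtain ⟨K, hK, hKs, hKc⟩ := LocallyCompactSpace.local_compact_nhds t₀ s hs
  obtain ⟨C, hC⟩ := (hKc.prod isCompact_uIcc).exists_bound_of_continuousOn
    (hF'.mono (prod_mono_left hKs))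
  have hF't₀ : ContinuousOn (F' t₀) (uIcc a b) :=
    hF'.comp (f := fun x => (t₀, x)) (by fun_prop) fun x hx => ⟨mem_of_mem_nhds hs, hx⟩
  have hmeas {G : ℝ → E} (hG : ContinuousOn G (uIcc a b)) :
      AEStronglyMeasurable G (volume.restrict (uIoc a b)) :=
    (hG.mono uIoc_subset_uIcc).aestronglyMeasurable measurableSet_uIoc
  refine (intervalIntegral.hasDerivAt_integral_of_dominated_loc_of_deriv_le (F' := F')
    (bound := fun _ => C) hK ?_ (hF t₀ (mem_of_mem_nhds hs)).intervalIntegrable (hmeas hF't₀)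
    ?_ intervalIntegrable_const ?_).2
  · filter_upwards [hs] with t ht using hmeas (hF t ht)
  · exact .of_forall fun x hx t ht => hC (t, x) ⟨ht, uIoc_subset_uIcc hx⟩
  · exact .of_forall fun x hx t ht => hderiv t (hKs ht) x (uIoc_subset_uIcc hx)

end ParametricIntegrals

section SobolevNorms

variable {m : ℕ} {p q : ℝ≥0∞} {v : ℝ → ℝ}

lemma sobLp_nonneg : 0 ≤ sobLp m p v := ENNReal.toReal_nonneg

lemma memLp_iteratedDeriv (hv : Continuous (iteratedDeriv m v)) (p : ℝ≥0∞) :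
    MemLp (iteratedDeriv m v) p (volume.restrict (Ioc (0 : ℝ) 1)) := by
  obtain ⟨C, hC⟩ := isCompact_Icc.exists_bound_of_continuousOn (s := Icc (0 : ℝ) 1) hv.continuousOn
  exact .of_bound hv.aestronglyMeasurable C
    (ae_restrict_of_forall_mem measurableSet_Ioc fun x hx => hC x (Ioc_subset_Icc_self hx))

lemma sobLp_two_sq (hv : Continuous (iteratedDeriv m v)) :
    sobLp m 2 v ^ 2 = ∫ x in (0 : ℝ)..1, iteratedDeriv m v x ^ 2 := by
  have hnorm : sobLp m 2 v = lpNorm (iteratedDeriv m v) 2 (volume.restrict (Ioc 0 1)) :=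
    toReal_eLpNorm hv.aestronglyMeasurable
  rw [hnorm, lpNorm_eq_integral_norm_rpow_toReal two_ne_zero ENNReal.ofNat_ne_top
    hv.aestronglyMeasurable, intervalIntegral.integral_of_le zero_le_one]
  simp only [ENNReal.toReal_ofNat, Real.rpow_ofNat, Real.norm_eq_abs, sq_abs]
  rw [← Real.rpow_natCast, ← Real.rpow_mul (integral_nonneg fun x => sq_nonneg _)]
  norm_num

lemma sobLp_mono_exponent (hv : Continuous (iteratedDeriv m v)) (hpq : p ≤ q) :
    sobLp m p v ≤ sobLp m q v := by
  have : IsProbabilityMeasure (volume.restrict (Ioc (0 : ℝ) 1)) := ⟨by simp⟩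
  exact ENNReal.toReal_mono (memLp_iteratedDeriv hv q).eLpNorm_ne_top
    (eLpNorm_le_eLpNorm_of_exponent_le hpq hv.aestronglyMeasurable)

lemma sobLp_le_of_abs_le {K : ℝ} (hv : ∀ x, |iteratedDeriv m v x| ≤ K) : sobLp m p v ≤ K := by
  have hK : 0 ≤ K := (abs_nonneg _).trans (hv 0)
  refine ENNReal.toReal_le_of_le_ofReal hK ?_
  simpa using eLpNorm_le_of_ae_bound (p := p) (μ := volume.restrict (Ioc (0 : ℝ) 1))
    (.of_forall hv)

lemma sobLp_pos_of_periodic (hv : Continuous (iteratedDeriv m v))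
    (hper : Function.Periodic (iteratedDeriv m v) 1) (hp : p ≠ 0)
    (hne : ∃ x, iteratedDeriv m v x ≠ 0) : 0 < sobLp m p v := by
  obtain ⟨x, hx⟩ := hne
  refine ENNReal.toReal_pos (fun hzero => hx ?_) (memLp_iteratedDeriv hv p).eLpNorm_ne_top
  rw [eLpNorm_eq_zero_iff hv.aestronglyMeasurable hp] at hzero
  obtain ⟨y, hy, hxy⟩ := hper.exists_mem_Ioc one_pos x 0
  rw [zero_add] at hy
  rw [hxy]
  exact Measure.eqOn_Ioc_of_ae_eq volume hzero hv.continuousOn continuousOn_const hy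

end SobolevNorms

namespace IsBurgersSolution

variable {f : ℝ → ℝ} {σ ν : ℝ} {u : ℝ → ℝ → ℝ} {t : ℝ}

section SpaceDerivative

lemma contDiffAt (h : IsBurgersSolution f σ ν u) (ht : 0 < t) (x : ℝ) :
    ContDiffAt ℝ ∞ (uncurry u) (t, x) :=
  h.hu.contDiffAt (prod_mem_nhds (Ici_mem_nhds ht) Filter.univ_mem)

lemma contDiffAt_partialSnd (h : IsBurgersSolution f σ ν u) (ht : 0 < t) (x : ℝ) :
    ContDiffAt ℝ ∞ (uncurry (partialSnd u)) (t, x) :=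
  _root_.contDiffAt_partialSnd (h.contDiffAt ht x) (by simp)

lemma continuousOn_partialSnd (h : IsBurgersSolution f σ ν u) :
    ContinuousOn (uncurry (partialSnd u)) (Ici (0 : ℝ) ×ˢ univ) :=
  _root_.continuousOn_partialSnd (uniqueDiffOn_Ici 0) (h.hu.of_le (by simp))

lemma periodic_partialSnd (h : IsBurgersSolution f σ ν u) (t : ℝ) :
    Function.Periodic (partialSnd u t) 1 := fun x => by
  have hper : (fun y => u t (y + 1)) = u t := funext (h.hper t)
  rw [partialSnd, ← deriv_comp_add_const, hper, partialSnd]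

lemma partialFst_eq (h : IsBurgersSolution f σ ν u) (ht : 0 < t) (x : ℝ) :
    partialFst u t x =
      ν * partialSnd (partialSnd u) t x - deriv f (u t x) * partialSnd u t x := by
  have hpde : partialFst u t x + deriv f (u t x) * partialSnd u t x -
      ν * partialSnd (partialSnd u) t x = 0 := h.hpde t ht x
  linarith

lemma partialFst_partialSnd_eq (h : IsBurgersSolution f σ ν u) (ht : 0 < t) (x : ℝ) :
    partialFst (partialSnd u) t x =
      ν * partialSnd (partialSnd (partialSnd u)) t x -
        (iteratedDeriv 2 f (u t x) * partialSnd u t x ^ 2 +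
          deriv f (u t x) * partialSnd (partialSnd u) t x) := by
  have hu := hasDerivAt_partialSnd ((h.contDiffAt ht x).differentiableAt (by simp))
  have hux := h.contDiffAt_partialSnd ht x
  have huxx : ContDiffAt ℝ ∞ (uncurry (partialSnd (partialSnd u))) (t, x) :=
    _root_.contDiffAt_partialSnd hux (by simp)
  have hf' : HasDerivAt (deriv f) (iteratedDeriv 2 f (u t x)) (u t x) := by
    rw [iteratedDeriv_succ, iteratedDeriv_one]
    exact ((contDiff_infty_iff_deriv.1 h.hf).2.differentiable (by simp) _).hasDerivAt
  have hrhs := ((hasDerivAt_partialSnd (huxx.differentiableAt (by simp))).const_mul ν).sub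
    ((hf'.comp x hu).mul (hasDerivAt_partialSnd (hux.differentiableAt (by simp))))
  have hC2 : ContDiffAt ℝ (minSmoothness ℝ 2) (uncurry u) (t, x) := by
    rw [minSmoothness_of_isRCLikeNormedField]
    exact (h.contDiffAt ht x).of_le (WithTop.coe_le_coe.2 le_top)
  rw [partialFst_partialSnd_comm hC2, partialSnd, funext (h.partialFst_eq ht)]
  refine hrhs.deriv.trans ?_
  simp only [Function.comp_apply]
  ring

lemma oleinik (h : IsBurgersSolution f σ ν u) (ht : 0 < t) (x : ℝ) :
    partialSnd u t x ≤ (σ * t)⁻¹ := by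
  have hriccati : ∀ s ∈ Ioc 0 t, ∀ y, (∀ z, partialSnd u s z ≤ partialSnd u s y) →
      partialFst (partialSnd u) s y ≤ -(σ * partialSnd u s y ^ 2) := by
    intro s hs y hmax
    have hlocal : IsLocalMax (partialSnd u s) y := .of_forall hmax
    have hux := hasDerivAt_partialSnd
      ((h.contDiffAt_partialSnd hs.1 y).differentiableAt (by simp))
    have hfirst : partialSnd (partialSnd u) s y = 0 := hlocal.deriv_eq_zero
    have hsecond : partialSnd (partialSnd (partialSnd u)) s y ≤ 0 :=
      deriv_deriv_nonpos_of_isLocalMax hlocal hux.continuousAt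
    have hdiffusion := mul_nonpos_of_nonneg_of_nonpos h.hν.le hsecond
    have hconvex := mul_le_mul_of_nonneg_right (h.hconv (u s y)) (sq_nonneg (partialSnd u s y))
    rw [h.partialFst_partialSnd_eq hs.1, hfirst]
    linarith
  simpa using le_inv_of_riccati_at_spatial_max ht one_pos h.hσ
    (h.continuousOn_partialSnd.mono (prod_mono_left Icc_subset_Ici_self))
    (fun s _ => h.periodic_partialSnd s)
    (fun s hs y => (hasDerivAt_partialFst
      ((h.contDiffAt_partialSnd hs.1 y).differentiableAt (by simp))).differentiableAt)
    hriccati x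

end SpaceDerivative

section Energy

lemma continuous_slice (h : IsBurgersSolution f σ ν u) (ht : 0 ≤ t) : Continuous (u t) :=
  h.hu.continuousOn.comp_continuous (f := fun x => (t, x)) (by fun_prop)
    fun _ => ⟨ht, mem_univ _⟩

lemma continuous_partialSnd_slice (h : IsBurgersSolution f σ ν u) (ht : 0 ≤ t) :
    Continuous (partialSnd u t) :=
  h.continuousOn_partialSnd.comp_continuous (f := fun x => (t, x)) (by fun_prop)
    fun _ => ⟨ht, mem_univ _⟩

lemma sobLp_zero_two_sq (h : IsBurgersSolution f σ ν u) (ht : 0 ≤ t) :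
    sobLp 0 2 (u t) ^ 2 = ∫ x in (0 : ℝ)..1, u t x ^ 2 := by
  simpa only [iteratedDeriv_zero] using
    sobLp_two_sq (m := 0) (by simpa only [iteratedDeriv_zero] using h.continuous_slice ht)

lemma sobLp_one_two_sq (h : IsBurgersSolution f σ ν u) (ht : 0 ≤ t) :
    sobLp 1 2 (u t) ^ 2 = ∫ x in (0 : ℝ)..1, partialSnd u t x ^ 2 := by
  rw [sobLp_two_sq (by rw [iteratedDeriv_one]; exact h.continuous_partialSnd_slice ht),
    iteratedDeriv_one]
  rfl

lemma continuousOn_sobLp_zero_two_sq (h : IsBurgersSolution f σ ν u) :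
    ContinuousOn (fun t => sobLp 0 2 (u t) ^ 2) (Ici 0) := by
  have hsq : ContinuousOn (uncurry fun t x => u t x ^ 2) (Ici 0 ×ˢ univ) := h.hu.continuousOn.pow 2
  exact (continuousOn_intervalIntegral hsq 0 1).congr fun _ ht => h.sobLp_zero_two_sq ht

lemma continuousOn_sobLp_one_two_sq (h : IsBurgersSolution f σ ν u) :
    ContinuousOn (fun t => sobLp 1 2 (u t) ^ 2) (Ici 0) := by
  have hsq : ContinuousOn (uncurry fun t x => partialSnd u t x ^ 2) (Ici 0 ×ˢ univ) :=
    h.continuousOn_partialSnd.pow 2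
  exact (continuousOn_intervalIntegral hsq 0 1).congr fun _ ht => h.sobLp_one_two_sq ht

lemma integral_mul_partialFst (h : IsBurgersSolution f σ ν u) (ht : 0 < t) :
    ∫ x in (0 : ℝ)..1, u t x * partialFst u t x =
      -ν * ∫ x in (0 : ℝ)..1, partialSnd u t x ^ 2 := by
  have hu (x : ℝ) : HasDerivAt (u t) (partialSnd u t x) x :=
    hasDerivAt_partialSnd ((h.contDiffAt ht x).differentiableAt (by simp))
  have hux (x : ℝ) : HasDerivAt (partialSnd u t) (partialSnd (partialSnd u) t x) x :=
    hasDerivAt_partialSnd ((h.contDiffAt_partialSnd ht x).differentiableAt (by simp))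
  have hcu := h.continuous_slice ht.le
  have hcux := h.continuous_partialSnd_slice ht.le
  have hcuxx : Continuous (partialSnd (partialSnd u) t) := by
    refine continuous_iff_continuousAt.2 fun x => ?_
    exact (hasDerivAt_partialSnd ((_root_.contDiffAt_partialSnd (m := ∞)
      (h.contDiffAt_partialSnd ht x) (by simp)).differentiableAt (by simp))).continuousAt
  have hcf' : Continuous (deriv f) := (contDiff_infty_iff_deriv.1 h.hf).2.continuous
  have hends : u t 1 = u t 0 := by simpa using h.hper t 0
  have hends' : partialSnd u t 1 = partialSnd u t 0 := by simpa using h.periodic_partialSnd t 0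
  have htransport : ∫ x in (0 : ℝ)..1, u t x * deriv f (u t x) * partialSnd u t x = 0 :=
    integral_comp_mul_deriv_eq_zero (g := fun y => y * deriv f y) (by fun_prop)
      (fun x _ => hu x) hcux.continuousOn hends.symm
  have hdiffusion : ∫ x in (0 : ℝ)..1, u t x * partialSnd (partialSnd u) t x =
      -∫ x in (0 : ℝ)..1, partialSnd u t x ^ 2 :=
    integral_mul_deriv_deriv_eq_neg (fun x _ => hu x) (fun x _ => hux x)
      (hcuxx.intervalIntegrable 0 1) hends.symm hends'.symm
  calc ∫ x in (0 : ℝ)..1, u t x * partialFst u t x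
      = ∫ x in (0 : ℝ)..1, (ν * (u t x * partialSnd (partialSnd u) t x) -
          u t x * deriv f (u t x) * partialSnd u t x) := by
        congr with x
        rw [h.partialFst_eq ht]
        ring
    _ = -ν * ∫ x in (0 : ℝ)..1, partialSnd u t x ^ 2 := by
        rw [intervalIntegral.integral_sub (Continuous.intervalIntegrable (by fun_prop) 0 1)
          (Continuous.intervalIntegrable (by fun_prop) 0 1), htransport, sub_zero,
          intervalIntegral.integral_const_mul, hdiffusion, mul_neg, neg_mul]

lemma hasDerivAt_sobLp_zero_two_sq (h : IsBurgersSolution f σ ν u) (ht : 0 < t) :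
    HasDerivAt (fun t => sobLp 0 2 (u t) ^ 2) (-(2 * ν) * sobLp 1 2 (u t) ^ 2) t := by
  have hut : ContinuousOn (uncurry (partialFst u)) (Ioi (0 : ℝ) ×ˢ univ) := fun p hp =>
    (contDiffAt_partialFst (m := 0) (h.contDiffAt hp.1 p.2) (by simp)).continuousAt
      |>.continuousWithinAt
  have hderiv : HasDerivAt (fun t => ∫ x in (0 : ℝ)..1, u t x ^ 2)
      (∫ x in (0 : ℝ)..1, 2 * (u t x * partialFst u t x)) t := by
    refine hasDerivAt_intervalIntegral (F := fun t x => u t x ^ 2)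
      (F' := fun t x => 2 * (u t x * partialFst u t x)) (Ioi_mem_nhds ht)
      (fun s hs => ((h.continuous_slice (le_of_lt hs)).pow 2).continuousOn) ?_ ?_
    · exact (continuousOn_const.mul ((h.hu.continuousOn.mono
        (prod_mono_left Ioi_subset_Ici_self)).mul hut)).mono (prod_mono_right (subset_univ _))
    · intro s hs x _
      have hux := hasDerivAt_partialFst ((h.contDiffAt hs x).differentiableAt (by simp))
      exact (hux.pow 2).congr_deriv (by push_cast; ring)
  rw [intervalIntegral.integral_const_mul, h.integral_mul_partialFst ht,
    ← h.sobLp_one_two_sq ht.le] at hderiv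
  refine (hderiv.congr_deriv (by ring)).congr_of_eventuallyEq ?_
  filter_upwards [Ioi_mem_nhds ht] with s hs using h.sobLp_zero_two_sq (le_of_lt hs)

lemma energy_identity (h : IsBurgersSolution f σ ν u) {a b : ℝ} (ha : 0 ≤ a) (hab : a ≤ b) :
    sobLp 0 2 (u a) ^ 2 - sobLp 0 2 (u b) ^ 2 = 2 * ν * ∫ t in a..b, sobLp 1 2 (u t) ^ 2 := by
  have hsub : Icc a b ⊆ Ici 0 := Icc_subset_Ici_self.trans (Ici_subset_Ici.2 ha)
  have hint : IntervalIntegrable (fun t => -(2 * ν) * sobLp 1 2 (u t) ^ 2) volume a b :=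
    ((h.continuousOn_sobLp_one_two_sq.mono hsub).intervalIntegrable_of_Icc hab).const_mul _
  have hftc := intervalIntegral.integral_eq_sub_of_hasDerivAt_of_le hab
    (h.continuousOn_sobLp_zero_two_sq.mono hsub)
    (fun t ht => h.hasDerivAt_sobLp_zero_two_sq (ha.trans_lt ht.1)) hint
  rw [intervalIntegral.integral_const_mul] at hftc
  linarith

lemma sobLp_zero_two_sq_sub_le {T C : ℝ} (h : IsBurgersSolution f σ ν u) (hT : 0 ≤ T)
    (hC : ∀ t ∈ Icc 0 T, sobLp 1 2 (u t) ^ 2 ≤ C * ν⁻¹) :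
    sobLp 0 2 (u 0) ^ 2 - 2 * C * T ≤ sobLp 0 2 (u T) ^ 2 := by
  have hdissipation : ∫ t in 0..T, sobLp 1 2 (u t) ^ 2 ≤ C * ν⁻¹ * T := by
    calc ∫ t in 0..T, sobLp 1 2 (u t) ^ 2 ≤ ∫ _ in 0..T, C * ν⁻¹ :=
          intervalIntegral.integral_mono_on hT ((h.continuousOn_sobLp_one_two_sq.mono
            Icc_subset_Ici_self).intervalIntegrable_of_Icc hT) intervalIntegrable_const hC
      _ = C * ν⁻¹ * T := by
        rw [intervalIntegral.integral_const, sub_zero, smul_eq_mul, mul_comm]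
  have hloss : 2 * ν * ∫ t in 0..T, sobLp 1 2 (u t) ^ 2 ≤ 2 * C * T :=
    calc 2 * ν * ∫ t in 0..T, sobLp 1 2 (u t) ^ 2 ≤ 2 * ν * (C * ν⁻¹ * T) :=
          mul_le_mul_of_nonneg_left hdissipation (mul_nonneg two_pos.le h.hν.le)
      _ = 2 * C * T := by field_simp [h.hν.ne']
  linarith [h.energy_identity le_rfl hT]

lemma sobLp_zero_two_le (h : IsBurgersSolution f σ ν u) (ht : 0 < t) :
    sobLp 0 2 (u t) ≤ (σ * t)⁻¹ := by
  have hmean : ∫ x in (0 : ℝ)..1, u t x = 0 := by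
    rw [intervalIntegral.integral_of_le zero_le_one, h.hmean t ht.le]
  obtain ⟨z, hz⟩ := exists_eq_zero_of_integral_eq_zero zero_ne_one
    (h.continuous_slice ht.le).continuousOn hmean
  have hdiff : Differentiable ℝ (u t) := fun x =>
    (hasDerivAt_partialSnd ((h.contDiffAt ht x).differentiableAt (by simp))).differentiableAt
  refine sobLp_le_of_abs_le fun x => ?_
  simpa only [iteratedDeriv_zero, mul_one] using
    abs_le_mul_period_of_deriv_le one_pos hdiff (h.oleinik ht) (h.hper t) hz x

end Energy

lemma sobLp_zero_one_pos (h : IsBurgersSolution f σ ν u) : 0 < sobLp 0 1 (u 0) :=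
  sobLp_pos_of_periodic (by simpa only [iteratedDeriv_zero] using h.continuous_slice le_rfl)
    (by rw [iteratedDeriv_zero]; exact h.hper 0) one_ne_zero
    (by simpa only [iteratedDeriv_zero] using h.hinit)

lemma burgersD_pos (h : IsBurgersSolution f σ ν u) : 0 < burgersD u :=
  lt_max_of_lt_left (inv_pos.2 h.sobLp_zero_one_pos)

lemma inv_burgersD_le_sobLp_zero_two (h : IsBurgersSolution f σ ν u) :
    (burgersD u)⁻¹ ≤ sobLp 0 2 (u 0) :=
  calc (burgersD u)⁻¹ ≤ sobLp 0 1 (u 0) :=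
        inv_le_of_inv_le₀ h.sobLp_zero_one_pos (le_max_left _ _)
    _ ≤ sobLp 0 2 (u 0) := sobLp_mono_exponent
        (by simpa only [iteratedDeriv_zero] using h.continuous_slice le_rfl) one_le_two

end IsBurgersSolution

section BurgersTimes

variable {σ D C : ℝ}

lemma burgersT₁_pos (hD : 0 < D) (hC : 0 < C) : 0 < burgersT₁ D C := by
  unfold burgersT₁
  positivity

lemma burgersT₁_lt_burgersT₂ (hD : 0 < D) (hC : 0 < C) : burgersT₁ D C < burgersT₂ σ D C :=
  calc burgersT₁ D C < 3 / 2 * burgersT₁ D C := by linarith [burgersT₁_pos hD hC]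
    _ ≤ burgersT₂ σ D C := le_max_left _ _

lemma two_mul_mul_burgersT₁ (hC : C ≠ 0) : 2 * C * burgersT₁ D C = D⁻¹ ^ 2 / 2 := by
  rw [burgersT₁, inv_pow]
  field_simp
  norm_num

lemma inv_mul_burgersT₂_le (hσ : 0 < σ) (hD : 0 < D) : (σ * burgersT₂ σ D C)⁻¹ ≤ D⁻¹ / 2 :=
  calc (σ * burgersT₂ σ D C)⁻¹ ≤ (σ * (2 * D * σ⁻¹))⁻¹ :=
        inv_anti₀ (by positivity) (mul_le_mul_of_nonneg_left (le_max_right _ _) hσ.le)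
    _ = D⁻¹ / 2 := by field_simp

end BurgersTimes

lemma IsBurgersSolution.le_integral_sobLp_one_two_sq {f : ℝ → ℝ} {σ ν C : ℝ} {u : ℝ → ℝ → ℝ}
    (h : IsBurgersSolution f σ ν u) (hC : 0 < C)
    (hCu : ∀ t ∈ Icc 0 (burgersT₁ (burgersD u) C), sobLp 1 2 (u t) ^ 2 ≤ C * ν⁻¹) :
    (burgersD u)⁻¹ ^ 2 / 8 * ν⁻¹ ≤
      ∫ t in burgersT₁ (burgersD u) C..burgersT₂ σ (burgersD u) C, sobLp 1 2 (u t) ^ 2 := by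
  have hD := h.burgersD_pos
  set D := burgersD u
  have hT₁ : 0 < burgersT₁ D C := burgersT₁_pos hD hC
  have hT₁₂ : burgersT₁ D C < burgersT₂ σ D C := burgersT₁_lt_burgersT₂ hD hC
  have hinitial : D⁻¹ ^ 2 ≤ sobLp 0 2 (u 0) ^ 2 :=
    pow_le_pow_left₀ (inv_nonneg.2 hD.le) h.inv_burgersD_le_sobLp_zero_two 2
  have hT₁_energy : D⁻¹ ^ 2 / 2 ≤ sobLp 0 2 (u (burgersT₁ D C)) ^ 2 := by
    linarith [h.sobLp_zero_two_sq_sub_le hT₁.le hCu, two_mul_mul_burgersT₁ (D := D) hC.ne']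
  have hT₂_energy : sobLp 0 2 (u (burgersT₂ σ D C)) ^ 2 ≤ (D⁻¹ / 2) ^ 2 :=
    pow_le_pow_left₀ sobLp_nonneg
      ((h.sobLp_zero_two_le (hT₁.trans hT₁₂)).trans (inv_mul_burgersT₂_le h.hσ hD)) 2
  rw [← div_eq_mul_inv, div_le_iff₀ h.hν]
  linarith [h.energy_identity hT₁.le hT₁₂.le]

theorem statement8_general (σ D Ct : ℝ) (hCt : 0 < Ct) :
    ∃ c > 0, ∀ (f : ℝ → ℝ) (ν : ℝ) (u : ℝ → ℝ → ℝ), IsBurgersSolution f σ ν u →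
      burgersD u = D →
        (∀ t ∈ Icc 0 (burgersT₁ D Ct), sobLp 1 2 (u t) ^ 2 ≤ Ct * ν⁻¹) →
          c * ν⁻¹ ≤ timeAvg (burgersT₁ D Ct) (burgersT₂ σ D Ct)
            (fun t => sobLp 1 2 (u t) ^ 2) := by
  rcases le_or_gt D 0 with hD | hD
  · exact ⟨1, one_pos, fun f ν u hu huD => absurd (huD ▸ hu.burgersD_pos) hD.not_gt⟩
  have hT : 0 < (burgersT₂ σ D Ct - burgersT₁ D Ct)⁻¹ :=
    inv_pos.2 (sub_pos.2 (burgersT₁_lt_burgersT₂ hD hCt))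
  refine ⟨(burgersT₂ σ D Ct - burgersT₁ D Ct)⁻¹ * (D⁻¹ ^ 2 / 8), by positivity, ?_⟩
  rintro f ν u hu rfl hCu
  rw [timeAvg, mul_assoc]
  exact mul_le_mul_of_nonneg_left (hu.le_integral_sobLp_one_two_sq hCt hCu) hT.le

/-- There is `c > 0` depending only on `f` and `D` such that for
every `ν ∈ (0,1]`, the time average over `[T₁,T₂]` satisfies
`{‖u(t)‖₁²} ≥ c ν⁻¹`. -/
theorem statement8 (f : ℝ → ℝ) (σ D Ct : ℝ) (hCt : 0 < Ct)
    (hCtb : ∀ ν, 0 < ν → ν ≤ 1 →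
      ∀ u : ℝ → ℝ → ℝ, IsBurgersSolution f σ ν u → burgersD u = D →
        ∀ t, 0 ≤ t → sobLp 1 2 (u t) ^ 2 ≤ Ct * ν⁻¹) :
    ∃ c > 0, ∀ ν, 0 < ν → ν ≤ 1 →
      ∀ u : ℝ → ℝ → ℝ, IsBurgersSolution f σ ν u → burgersD u = D →
        c * ν⁻¹ ≤ timeAvg (burgersT₁ D Ct) (burgersT₂ σ D Ct)
              (fun t => sobLp 1 2 (u t) ^ 2) := by
  obtain ⟨c, hc, hmain⟩ := statement8_general σ D Ct hCt
  exact ⟨c, hc, fun ν hν hν1 u hu hD =>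
    hmain f ν u hu hD fun t ht => hCtb ν hν hν1 u hu hD t ht.1⟩
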